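/- Let a, b be coprime positive integers with a < b and b even. Then the set Γ = {0} ∪ { b^i/(4a) : i ∈ ℕ, i ≥ 1 } is an infinite set of real numbers such that γ − γ' ∈ 𝒪_{a,b} for all distinct γ, γ' ∈ Γ. Consequently, for λ = a/b with b even, there exists a countably infinite collection of mutually orthogonal exponentials in L²(X_λ, ν_λ). -/

import Mathlib

/-!
Invariance of `ν` gives its characteristic function `φ` the functional equation
`φ t = cos t * φ (λ t)`, so `φ t = 0` as soon as `cos (λⁿ t) = 0` for some `n`. The points
`t = 2πx` with `x ∈ 𝒪_{a,b}` have this property, and the inner product of the exponentials with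
frequencies `γ` and `γ'` is `φ (2π(γ - γ'))`.

For the differences, `b^(i+1)/(4a) * m = (1/4)(b/a)^(i+1) * (a^i * m)` lies in `𝒪_{a,b}` when `a`
and `m` are odd, and for `i < j` one has `b^(j+1) - b^(i+1) = b^(i+1) * (b^(j-i) - 1)`, whose last
factor is odd because `b` is even.
-/

open MeasureTheory
open scoped ENNReal

/-- The set `𝒪_{a,b} = {(1/4)(b/a)ⁿ(2k+1) : n ∈ ℕ₀, k ∈ ℤ}`. -/
def OsetAB (a b : ℕ) : Set ℝ :=
  {x : ℝ | ∃ (n : ℕ) (k : ℤ), x = (1 / 4) * ((b : ℝ) / (a : ℝ)) ^ n * (2 * (k : ℝ) + 1)}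

lemma neg_mem_OsetAB {a b : ℕ} {x : ℝ} (hx : x ∈ OsetAB a b) : -x ∈ OsetAB a b := by
  obtain ⟨n, k, rfl⟩ := hx
  refine ⟨n, -k - 1, ?_⟩
  push_cast
  ring

lemma sub_mem_OsetAB_comm {a b : ℕ} {x y : ℝ} : x - y ∈ OsetAB a b ↔ y - x ∈ OsetAB a b := by
  constructor <;> intro h <;> simpa only [neg_sub] using neg_mem_OsetAB h

lemma pow_succ_div_mul_mem_OsetAB {a : ℕ} (ha : Odd a) (b i : ℕ) {m : ℤ} (hm : Odd m) :
    (b : ℝ) ^ (i + 1) / (4 * a) * m ∈ OsetAB a b := by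
  obtain ⟨k, hk⟩ : Odd ((a : ℤ) ^ i * m) := (ha.natCast.pow).mul hm
  have hk_real : (a : ℝ) ^ i * m = 2 * k + 1 := by exact_mod_cast hk
  have ha_ne_zero : (a : ℝ) ≠ 0 := Nat.cast_ne_zero.2 ha.pos.ne'
  refine ⟨i + 1, k, ?_⟩
  rw [← hk_real, div_pow]
  field_simp
  ring

lemma pow_succ_div_sub_pow_succ_div_mem_OsetAB {a b : ℕ} (ha : Odd a) (hb : Even b) {i j : ℕ}
    (hij : i < j) :
    (b : ℝ) ^ (j + 1) / (4 * a) - (b : ℝ) ^ (i + 1) / (4 * a) ∈ OsetAB a b := by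
  obtain ⟨d, rfl⟩ := Nat.exists_eq_add_of_lt hij
  have hodd : Odd ((b : ℤ) ^ (d + 1) - 1) :=
    (hb.natCast.pow_of_ne_zero d.succ_ne_zero).sub_odd odd_one
  have hfactor : (b : ℝ) ^ (i + d + 1 + 1) / (4 * a) - (b : ℝ) ^ (i + 1) / (4 * a)
      = (b : ℝ) ^ (i + 1) / (4 * a) * ((b ^ (d + 1) - 1 : ℤ) : ℝ) := by
    push_cast
    ring
  rw [hfactor]
  exact pow_succ_div_mul_mem_OsetAB ha b i hodd

/-- The frequency set `Γ = {0} ∪ {b^i/(4a) : i ≥ 1}` of the orthogonal exponentials. -/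
def orthogonalFrequencies (a b : ℕ) : Set ℝ :=
  {0} ∪ {x : ℝ | ∃ i : ℕ, 1 ≤ i ∧ x = (b : ℝ) ^ i / (4 * (a : ℝ))}

lemma orthogonalFrequencies_eq_insert_range (a b : ℕ) :
    orthogonalFrequencies a b
      = insert 0 (Set.range fun i : ℕ => (b : ℝ) ^ (i + 1) / (4 * a)) := by
  rw [orthogonalFrequencies, Set.singleton_union]
  congr 1
  ext x
  constructor
  · rintro ⟨i, hi, rfl⟩
    exact ⟨i - 1, by simp only [Nat.sub_add_cancel hi]⟩
  · rintro ⟨i, rfl⟩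
    exact ⟨i + 1, i.succ_pos, rfl⟩

lemma countable_orthogonalFrequencies (a b : ℕ) : (orthogonalFrequencies a b).Countable := by
  rw [orthogonalFrequencies_eq_insert_range]
  exact (Set.countable_range _).insert 0

lemma infinite_orthogonalFrequencies {a b : ℕ} (ha : a ≠ 0) (hb : 1 < b) :
    (orthogonalFrequencies a b).Infinite := by
  have hpow : StrictMono fun i : ℕ => (b : ℝ) ^ (i + 1) :=
    (pow_right_strictMono₀ (Nat.one_lt_cast.2 hb)).comp (strictMono_id.add_const 1)
  have hdiv : StrictMono fun i : ℕ => (b : ℝ) ^ (i + 1) / (4 * a) :=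
    hpow.div_const (by positivity)
  rw [orthogonalFrequencies_eq_insert_range]
  exact (Set.infinite_range_of_injective hdiv.injective).mono (Set.subset_insert _ _)

lemma pairwise_sub_mem_OsetAB_orthogonalFrequencies {a b : ℕ} (ha : Odd a) (hb : Even b) :
    (orthogonalFrequencies a b).Pairwise fun γ γ' => γ - γ' ∈ OsetAB a b := by
  have : Std.Symm fun x y : ℝ => x - y ∈ OsetAB a b := ⟨fun _ _ => sub_mem_OsetAB_comm.1⟩
  rw [orthogonalFrequencies_eq_insert_range, Set.pairwise_insert_of_symm]
  constructor
  · refine Pairwise.range_pairwise ((Std.Symm.pairwise_on _).2 fun i j hij => ?_)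
    exact sub_mem_OsetAB_comm.1 (pow_succ_div_sub_pow_succ_div_mem_OsetAB ha hb hij)
  · rintro _ ⟨i, rfl⟩ -
    rw [sub_mem_OsetAB_comm]
    simpa only [Int.cast_one, mul_one, sub_zero] using
      pow_succ_div_mul_mem_OsetAB ha b i odd_one

section CharFun

variable {E : Type*} [NormedAddCommGroup E] [InnerProductSpace ℝ E] [MeasurableSpace E]

lemma integrable_exp_inner_mul_I [OpensMeasurableSpace E] (μ : Measure E) [IsFiniteMeasure μ]
    (t : E) : Integrable (fun x : E => Complex.exp (inner ℝ x t * Complex.I)) μ :=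
  (BoundedContinuousFunction.innerProbChar t).integrable μ

lemma charFun_add_measure [OpensMeasurableSpace E] (μ ν : Measure E) [IsFiniteMeasure μ]
    [IsFiniteMeasure ν] (t : E) : charFun (μ + ν) t = charFun μ t + charFun ν t :=
  integral_add_measure (integrable_exp_inner_mul_I μ t) (integrable_exp_inner_mul_I ν t)

lemma charFun_smul_measure (r : ℝ≥0∞) (μ : Measure E) (t : E) :
    charFun (r • μ) t = r.toReal • charFun μ t :=
  integral_smul_measure _ r

lemma charFun_half_smul_map_add_half_smul_map_sub [BorelSpace E] (μ : Measure E)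
    [IsFiniteMeasure μ] (v t : E) :
    charFun ((1 / 2 : ℝ≥0∞) • μ.map (· + v) + (1 / 2 : ℝ≥0∞) • μ.map (· - v)) t
      = Complex.cos (inner ℝ v t : ℝ) * charFun μ t := by
  have hhalf : (1 / 2 : ℝ≥0∞) ≠ ⊤ := by simp
  have hadd := (μ.map (· + v)).smul_finite hhalf
  have hsub := (μ.map (· - v)).smul_finite hhalf
  rw [charFun_add_measure]
  simp_rw [charFun_smul_measure, sub_eq_add_neg, charFun_map_add_const,
    inner_neg_left, Complex.cos, Complex.ofReal_neg]
  simp only [one_div, ENNReal.toReal_inv, ENNReal.toReal_ofNat, Complex.real_smul,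
    Complex.ofReal_inv, Complex.ofReal_ofNat]
  ring

end CharFun

/-- Invariance of `ν` under the iterated function system `x ↦ c * x ± 1`, both branches having
weight `1/2`; for `0 < c < 1` the Bernoulli convolution `ν_c` is the only such probability
measure. -/
def IsBernoulliInvariant (c : ℝ) (ν : Measure ℝ) : Prop :=
  ν = (1 / 2 : ℝ≥0∞) • Measure.map (fun x : ℝ => c * x + 1) ν
    + (1 / 2 : ℝ≥0∞) • Measure.map (fun x : ℝ => c * x - 1) ν

namespace IsBernoulliInvariant

variable {c : ℝ} {ν : Measure ℝ} [IsFiniteMeasure ν]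

lemma charFun_eq_cos_mul (hν : IsBernoulliInvariant c ν) (t : ℝ) :
    charFun ν t = Complex.cos t * charFun ν (c * t) := by
  have hadd : ν.map (fun x => c * x + 1) = (ν.map (c * ·)).map (· + 1) :=
    (Measure.map_map (measurable_add_const 1) (measurable_const_mul c)).symm
  have hsub : ν.map (fun x => c * x - 1) = (ν.map (c * ·)).map (· - 1) :=
    (Measure.map_map (measurable_sub_const 1) (measurable_const_mul c)).symm
  calc charFun ν t
      = charFun ((1 / 2 : ℝ≥0∞) • (ν.map (c * ·)).map (· + 1)
          + (1 / 2 : ℝ≥0∞) • (ν.map (c * ·)).map (· - 1)) t := by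
        rw [← hadd, ← hsub, ← hν]
    _ = Complex.cos t * charFun ν (c * t) := by
        rw [charFun_half_smul_map_add_half_smul_map_sub, charFun_map_mul, real_inner_comm]
        simp

lemma charFun_eq_zero_of_cos_eq_zero (hν : IsBernoulliInvariant c ν) {n : ℕ} {t : ℝ}
    (hcos : Real.cos (c ^ n * t) = 0) : charFun ν t = 0 := by
  rw [hν.charFun_eq_cos_mul]
  induction n generalizing t with
  | zero =>
    rw [pow_zero, one_mul] at hcos
    rw [← Complex.ofReal_cos, hcos, Complex.ofReal_zero, zero_mul]
  | succ n ih =>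
    rw [pow_succ, mul_assoc] at hcos
    rw [hν.charFun_eq_cos_mul, ih hcos, mul_zero]

lemma charFun_two_pi_mul_eq_zero {a b : ℕ} (ha : a ≠ 0) (hb : b ≠ 0)
    (hν : IsBernoulliInvariant (a / b) ν) {x : ℝ} (hx : x ∈ OsetAB a b) :
    charFun ν (2 * Real.pi * x) = 0 := by
  obtain ⟨n, k, rfl⟩ := hx
  refine hν.charFun_eq_zero_of_cos_eq_zero (n := n) (Real.cos_eq_zero_iff.2 ⟨k, ?_⟩)
  rw [div_pow, div_pow]
  field_simp
  ring

end IsBernoulliInvariant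

lemma integral_exp_mul_conj_exp_eq_charFun (ν : Measure ℝ) (γ γ' : ℝ) :
    ∫ x : ℝ, Complex.exp (2 * Real.pi * Complex.I * γ * x)
        * (starRingEnd ℂ) (Complex.exp (2 * Real.pi * Complex.I * γ' * x)) ∂ν
      = charFun ν (2 * Real.pi * (γ - γ')) := by
  rw [charFun_apply_real]
  congr 1 with x
  rw [← Complex.exp_conj, ← Complex.exp_add]
  simp only [map_mul, Complex.conj_ofReal, Complex.conj_I, map_ofNat]
  push_cast
  ring_nf

theorem even_denominator_infinite_orthogonal_collection_general
    {a b : ℕ} (ha : Odd a) (hb : Even b) (hb_ne_zero : b ≠ 0)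
    {ν : Measure ℝ} [IsFiniteMeasure ν] (hν : IsBernoulliInvariant (a / b) ν) :
    (orthogonalFrequencies a b).Countable ∧ (orthogonalFrequencies a b).Infinite ∧
    ((orthogonalFrequencies a b).Pairwise fun γ γ' => γ - γ' ∈ OsetAB a b) ∧
    ((orthogonalFrequencies a b).Pairwise fun γ γ' =>
      ∫ x : ℝ, Complex.exp (2 * Real.pi * Complex.I * γ * x)
        * (starRingEnd ℂ) (Complex.exp (2 * Real.pi * Complex.I * γ' * x)) ∂ν = 0) := by
  have ha_ne_zero : a ≠ 0 := ha.pos.ne'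
  have hb_one_lt : 1 < b := Nat.le_of_dvd hb_ne_zero.bot_lt hb.two_dvd
  have hdiff := pairwise_sub_mem_OsetAB_orthogonalFrequencies ha hb
  refine ⟨countable_orthogonalFrequencies a b,
    infinite_orthogonalFrequencies ha_ne_zero hb_one_lt, hdiff, hdiff.mono' fun γ γ' hγ => ?_⟩
  rw [integral_exp_mul_conj_exp_eq_charFun]
  exact hν.charFun_two_pi_mul_eq_zero ha_ne_zero hb_ne_zero hγ

/-- Let `a, b` be coprime positive integers with `a < b` and `b` even.  The set
`Γ = {0} ∪ {b^i/(4a) : i ≥ 1}` is infinite and the difference of any two distinct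
elements of `Γ` lies in `𝒪_{a,b}`; consequently, for `λ = a/b` with `b` even, there is
a countably infinite collection of mutually orthogonal exponentials in `L²(X_λ, ν_λ)`. -/
theorem even_denominator_infinite_orthogonal_collection
    (a b : ℕ) (ha : 0 < a) (hab : a < b) (hco : Nat.Coprime a b) (hb : Even b)
    (ν : Measure ℝ) [IsProbabilityMeasure ν]
    (hatom : ∀ x : ℝ, ν {x} = 0)
    (hinv : ν = (1 / 2 : ℝ≥0∞) • Measure.map (fun x : ℝ => ((a : ℝ) / (b : ℝ)) * x + 1) ν
              + (1 / 2 : ℝ≥0∞) • Measure.map (fun x : ℝ => ((a : ℝ) / (b : ℝ)) * x - 1) ν) :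
    (({0} ∪ {x : ℝ | ∃ i : ℕ, 1 ≤ i ∧ x = (b : ℝ) ^ i / (4 * (a : ℝ))} : Set ℝ).Infinite) ∧
    (∀ γ ∈ ({0} ∪ {x : ℝ | ∃ i : ℕ, 1 ≤ i ∧ x = (b : ℝ) ^ i / (4 * (a : ℝ))} : Set ℝ),
      ∀ γ' ∈ ({0} ∪ {x : ℝ | ∃ i : ℕ, 1 ≤ i ∧ x = (b : ℝ) ^ i / (4 * (a : ℝ))} : Set ℝ),
        γ ≠ γ' → γ - γ' ∈ OsetAB a b) ∧
    (∃ Γ : Set ℝ, Γ.Countable ∧ Γ.Infinite ∧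
      ∀ γ ∈ Γ, ∀ γ' ∈ Γ, γ ≠ γ' →
        (∫ x : ℝ, Complex.exp (2 * Real.pi * Complex.I * γ * x)
          * (starRingEnd ℂ) (Complex.exp (2 * Real.pi * Complex.I * γ' * x)) ∂ν) = 0) := by
  obtain ⟨hcount, hinf, hdiff, horth⟩ := even_denominator_infinite_orthogonal_collection_general
    (Nat.coprime_two_right.1 (hco.coprime_dvd_right hb.two_dvd)) hb hab.ne_bot hinv
  exact ⟨hinf, fun _ h _ h' => hdiff h h', _, hcount, hinf, fun _ h _ h' => horth h h'⟩
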